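/- No point of T = ℍ/𝔞 is fixed simultaneously by the map (i;0) : x ↦ i·x and the map j' = (j;α) : x ↦ j·x + [(1+i)/2]; consequently the group Q̂₈ generated by these two maps acts on T without a global fixed point. -/

import Mathlib

/- STATEMENT 8: No point of T = ℍ/𝔞 is fixed simultaneously by (i;0) : x ↦ i·x and
j' = (j;α) : x ↦ j·x + [(1+i)/2]; consequently the group Q̂₈ generated by these two maps
acts on T without a global fixed point. -/

open scoped Quaternion

noncomputable def qi : ℍ[ℝ] := ⟨0, 1, 0, 0⟩
noncomputable def qj : ℍ[ℝ] := ⟨0, 0, 1, 0⟩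
noncomputable def qk : ℍ[ℝ] := ⟨0, 0, 0, 1⟩
noncomputable def qt : ℍ[ℝ] := (1 + qi + qj + qk) / 2
noncomputable def qα : ℍ[ℝ] := (1 + qi) / 2

/-- The Hurwitz order `𝔞 = ℤ·1 + ℤ·i + ℤ·j + ℤ·t` as an additive subgroup of `ℍ`. -/
noncomputable def hurwitz : AddSubgroup ℍ[ℝ] := AddSubgroup.closure {1, qi, qj, qt}

/-- The real torus `T = ℍ/𝔞`. -/
noncomputable abbrev T := ℍ[ℝ] ⧸ hurwitz

/-- The class map `ℍ → T = ℍ/𝔞`. -/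
noncomputable def π : ℍ[ℝ] → T := QuotientAddGroup.mk

/-!
In `𝔞` the unit `t - j` satisfies `j - 1 = (t - j)(i - 1)`. If `[x]` is fixed by `(i; 0)`, then
`(i - 1)x ∈ 𝔞`, hence `(j - 1)x = (t - j)(i - 1)x ∈ 𝔞`. If `[x]` is also fixed by `(j; α)`, then
`(j - 1)x + α ∈ 𝔞`, which forces `α ∈ 𝔞`. But `α = (1 + i)/2` is not a Hurwitz quaternion, because
it has both integral and half-integral components.
-/

section Affine

variable {R M : Type*} [Ring R] [AddCommGroup M] [Module R M] {L : AddSubgroup M}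
  {p q w : R} {r : M}

theorem translation_mem_of_common_fixed_point (hw : ∀ y ∈ L, w • y ∈ L)
    (hpq : q - 1 = w * (p - 1)) {x : M} (hp : ((p • x : M) : M ⧸ L) = x)
    (hq : ((q • x + r : M) : M ⧸ L) = x) : r ∈ L := by
  have hpx : (p - 1) • x ∈ L := by
    simpa only [sub_smul, one_smul] using QuotientAddGroup.eq_iff_sub_mem.1 hp
  have hqx : (q - 1) • x ∈ L := by
    simpa only [hpq, mul_smul] using hw _ hpx
  have hqr : (q - 1) • x + r ∈ L := by
    simpa only [sub_smul, one_smul, sub_add_eq_add_sub] using QuotientAddGroup.eq_iff_sub_mem.1 hq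
  exact (L.add_mem_cancel_left hqx).1 hqr

theorem no_common_fixed_point_general (hw : ∀ y ∈ L, w • y ∈ L) (hpq : q - 1 = w * (p - 1))
    (hr : r ∉ L) (f g : Equiv.Perm (M ⧸ L)) (hf : ∀ x : M, f x = (p • x : M))
    (hg : ∀ x : M, g x = (q • x + r : M)) :
    (¬ ∃ x, f x = x ∧ g x = x) ∧
    ¬ ∃ x, ∀ h ∈ Subgroup.closure ({f, g} : Set (Equiv.Perm (M ⧸ L))), h x = x := by
  have no_common : ¬ ∃ x, f x = x ∧ g x = x := by
    rintro ⟨x, hfx, hgx⟩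
    obtain ⟨x, rfl⟩ := QuotientAddGroup.mk_surjective x
    exact hr (translation_mem_of_common_fixed_point hw hpq ((hf x).symm.trans hfx)
      ((hg x).symm.trans hgx))
  refine ⟨no_common, fun ⟨x, hx⟩ ↦ no_common ⟨x, hx f ?_, hx g ?_⟩⟩ <;>
    exact Subgroup.subset_closure (by simp)

end Affine

@[simp] theorem qi_re : qi.re = 0 := rfl
@[simp] theorem qi_imI : qi.imI = 1 := rfl
@[simp] theorem qi_imJ : qi.imJ = 0 := rfl
@[simp] theorem qi_imK : qi.imK = 0 := rfl

@[simp] theorem qj_re : qj.re = 0 := rfl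
@[simp] theorem qj_imI : qj.imI = 0 := rfl
@[simp] theorem qj_imJ : qj.imJ = 1 := rfl
@[simp] theorem qj_imK : qj.imK = 0 := rfl

@[simp] theorem qk_re : qk.re = 0 := rfl
@[simp] theorem qk_imI : qk.imI = 0 := rfl
@[simp] theorem qk_imJ : qk.imJ = 0 := rfl
@[simp] theorem qk_imK : qk.imK = 1 := rfl

theorem quaternion_div_coe_eq_smul {R : Type*} [Field R] [LinearOrder R] [IsStrictOrderedRing R]
    (x : ℍ[R]) (r : R) : x / (r : ℍ[R]) = r⁻¹ • x := by
  rw [div_eq_mul_inv, ← Quaternion.coe_inv, Quaternion.mul_coe_eq_smul]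

theorem quaternion_div_two_eq_smul (x : ℍ[ℝ]) : x / 2 = (2 : ℝ)⁻¹ • x :=
  quaternion_div_coe_eq_smul x 2

@[simp] theorem qt_re : qt.re = 1 / 2 := by simp [qt, quaternion_div_two_eq_smul]
@[simp] theorem qt_imI : qt.imI = 1 / 2 := by simp [qt, quaternion_div_two_eq_smul]
@[simp] theorem qt_imJ : qt.imJ = 1 / 2 := by simp [qt, quaternion_div_two_eq_smul]
@[simp] theorem qt_imK : qt.imK = 1 / 2 := by simp [qt, quaternion_div_two_eq_smul]

@[simp] theorem qα_re : qα.re = 1 / 2 := by simp [qα, quaternion_div_two_eq_smul]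
@[simp] theorem qα_imK : qα.imK = 0 := by simp [qα, quaternion_div_two_eq_smul]

theorem exists_int_components_of_mem_hurwitz {x : ℍ[ℝ]} (hx : x ∈ hurwitz) :
    ∃ a b c d : ℤ, x.re = a + d / 2 ∧ x.imI = b + d / 2 ∧ x.imJ = c + d / 2 ∧ x.imK = d / 2 := by
  induction hx using AddSubgroup.closure_induction with
  | mem x hx =>
    rcases hx with rfl | rfl | rfl | rfl
    · exact ⟨1, 0, 0, 0, by simp⟩
    · exact ⟨0, 1, 0, 0, by simp⟩
    · exact ⟨0, 0, 1, 0, by simp⟩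
    · exact ⟨0, 0, 0, 1, by simp⟩
  | zero => exact ⟨0, 0, 0, 0, by simp⟩
  | add x y _ _ hx hy =>
    obtain ⟨a, b, c, d, hre, hi, hj, hk⟩ := hx
    obtain ⟨a', b', c', d', hre', hi', hj', hk'⟩ := hy
    refine ⟨a + a', b + b', c + c', d + d', ?_, ?_, ?_, ?_⟩ <;>
      simp only [Quaternion.re_add, Quaternion.imI_add, Quaternion.imJ_add, Quaternion.imK_add,
        Int.cast_add, *] <;>
      ring
  | neg x _ hx =>
    obtain ⟨a, b, c, d, hre, hi, hj, hk⟩ := hx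
    refine ⟨-a, -b, -c, -d, ?_, ?_, ?_, ?_⟩ <;>
      simp only [Quaternion.re_neg, Quaternion.imI_neg, Quaternion.imJ_neg, Quaternion.imK_neg,
        Int.cast_neg, *] <;>
      ring

theorem mem_hurwitz_iff {x : ℍ[ℝ]} : x ∈ hurwitz ↔ ∃ a b c d : ℤ,
    x.re = a + d / 2 ∧ x.imI = b + d / 2 ∧ x.imJ = c + d / 2 ∧ x.imK = d / 2 := by
  refine ⟨exists_int_components_of_mem_hurwitz, ?_⟩
  rintro ⟨a, b, c, d, hre, hi, hj, hk⟩
  have combination : x = a • (1 : ℍ[ℝ]) + b • qi + c • qj + d • qt := by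
    ext <;> simp [hre, hi, hj, hk, div_eq_mul_inv]
  have zsmul_generator_mem {g : ℍ[ℝ]} (hg : g ∈ ({1, qi, qj, qt} : Set ℍ[ℝ])) (n : ℤ) :
      n • g ∈ hurwitz :=
    zsmul_mem (AddSubgroup.subset_closure hg) n
  rw [combination]
  refine add_mem (add_mem (add_mem ?_ ?_) ?_) ?_ <;> exact zsmul_generator_mem (by simp) _

theorem mul_mem_hurwitz {x y : ℍ[ℝ]} (hx : x ∈ hurwitz) (hy : y ∈ hurwitz) :
    x * y ∈ hurwitz := by
  obtain ⟨a, b, c, d, hre, hi, hj, hk⟩ := mem_hurwitz_iff.1 hx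
  obtain ⟨a', b', c', d', hre', hi', hj', hk'⟩ := mem_hurwitz_iff.1 hy
  -- The last witness is twice the `k`-component of the product; the others are the differences of
  -- the remaining components with the `k`-component.
  refine mem_hurwitz_iff.2
    ⟨a * a' - b * b' - c * c' - b * c' + c * b' - b * d' - d * c' - d * d',
      a * b' + b * a' - b * c' + c * b' + c * d' + d * b' - d * c',
      a * c' + c * a' - b * c' + c * b' + c * d' - b * d' + d * b',
      a * d' + d * a' + d * d' + 2 * b * c' - 2 * c * b' + b * d' - c * d' + d * c' - d * b',
      ?_, ?_, ?_, ?_⟩ <;>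
    simp only [Quaternion.re_mul, Quaternion.imI_mul, Quaternion.imJ_mul, Quaternion.imK_mul,
      Int.cast_add, Int.cast_sub, Int.cast_mul, Int.cast_ofNat, *] <;>
    ring

theorem qt_sub_qj_mem_hurwitz : qt - qj ∈ hurwitz :=
  sub_mem (AddSubgroup.subset_closure (by simp)) (AddSubgroup.subset_closure (by simp))

theorem qj_sub_one_eq_qt_sub_qj_mul : qj - 1 = (qt - qj) * (qi - 1) := by
  ext <;> norm_num

theorem qα_notMem_hurwitz : qα ∉ hurwitz := by
  intro hα
  obtain ⟨a, -, -, d, hre, -, -, hk⟩ := mem_hurwitz_iff.1 hα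
  simp only [qα_re, qα_imK] at hre hk
  have two_mul_eq_one : 2 * a = 1 := by
    exact_mod_cast (by linarith : (2 * a : ℝ) = 1)
  omega

theorem no_common_fixed_point
    (fi fj : Equiv.Perm T)
    (hfi : ∀ x : ℍ[ℝ], fi (π x) = π (qi * x))
    (hfj : ∀ x : ℍ[ℝ], fj (π x) = π (qj * x + qα)) :
    (¬ ∃ x : T, fi x = x ∧ fj x = x) ∧
    ¬ ∃ x : T, ∀ g ∈ Subgroup.closure ({fi, fj} : Set (Equiv.Perm T)), g x = x :=
  no_common_fixed_point_general (fun _ ↦ mul_mem_hurwitz qt_sub_qj_mem_hurwitz)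
    qj_sub_one_eq_qt_sub_qj_mul qα_notMem_hurwitz fi fj hfi hfj
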